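/- Let B, F ∈ ℝ with B ≠ 0 and fix (x₀,y₀) ∈ ℝ². Define S(t,x,y) = (F²/(4B²))t + (F/(2B))(y−y₀−(F/B)t) − (B/2)(x+x₀)(y−y₀−(F/B)t) + (B/4)cot(Bt)[(y−y₀−(F/B)t)² + (x−x₀)²]. Then on the open set {(t,x,y) : sin(Bt) ≠ 0}, S satisfies the Hamilton–Jacobi equation ∂_tS + (∂_xS)² + (∂_yS + Bx)² − Fx = 0. -/

import Mathlib

/-!
A Galilean boost by a velocity `v` along the `y`-axis, with the usual phase, turns a solution of
the Hamilton–Jacobi equation with electric field `E` into one with electric field `E + B * v`;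
boosting by `F / B` therefore creates the field `F` out of the purely magnetic problem. There the
action is a quadratic form whose only time dependence is a factor `c = cot (B * t)`, and with
`u = x - x₀` and `w = y - y₀` the kinetic momenta are `B / 2 * (c * u - w)` and
`B / 2 * (c * w + u)`. Their squares add up to `(B / 2) ^ 2 * (1 + c ^ 2) * (u ^ 2 + w ^ 2)`, which
the Riccati equation `c' = -(B * (1 + c ^ 2))` balances against the time derivative.
-/

theorem hasDerivAt_apply_sub_const_mul {𝕜 E : Type*} [NontriviallyNormedField 𝕜]
    [NormedAddCommGroup E] [NormedSpace 𝕜 E] {f : 𝕜 → 𝕜 → E} {v t y : 𝕜}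
    (hf : DifferentiableAt 𝕜 (Function.uncurry f) (t, y - v * t)) :
    HasDerivAt (fun τ => f τ (y - v * τ))
      (deriv (fun τ => f τ (y - v * t)) t - v • deriv (f t) (y - v * t)) t := by
  have along_path {γ : 𝕜 → 𝕜 × 𝕜} {γ' : 𝕜 × 𝕜} {s : 𝕜} (hγ : HasDerivAt γ γ' s)
      (hs : γ s = (t, y - v * t)) :
      HasDerivAt (fun r => f (γ r).1 (γ r).2)
        (fderiv 𝕜 (Function.uncurry f) (t, y - v * t) γ') s :=
    hf.hasFDerivAt.comp_hasDerivAt_of_eq s hγ hs.symm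
  have h_fst := along_path ((hasDerivAt_id t).prodMk (hasDerivAt_const t (y - v * t))) rfl
  have h_snd := along_path
    ((hasDerivAt_const (y - v * t) t).prodMk (hasDerivAt_id (y - v * t))) rfl
  have h_diag := along_path
    ((hasDerivAt_id t).prodMk ((hasDerivAt_const_mul v).const_sub y)) rfl
  have h_split : ((1, -v) : 𝕜 × 𝕜) = (1, 0) - v • (0, 1) := by simp
  rw [h_split, map_sub, map_smul, ← h_fst.deriv, ← h_snd.deriv] at h_diag
  exact h_diag

section CrossedFields

variable {𝕜 : Type*} [NontriviallyNormedField 𝕜]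

/-- The left-hand side `∂ₜS + H(x, y, ∂ₓS, ∂_yS)` of the Hamilton–Jacobi equation for the
Hamiltonian `H = pₓ² + (p_y + Bx)² - Fx`. The partial derivatives are `deriv`s, with value `0` where
`S` is not differentiable. -/
noncomputable def hamiltonJacobiResidual (B F : 𝕜) (S : 𝕜 → 𝕜 → 𝕜 → 𝕜) (t x y : 𝕜) : 𝕜 :=
  deriv (fun τ => S τ x y) t
    + (deriv (fun ξ => S t ξ y) x) ^ 2
    + (deriv (fun η => S t x η) y + B * x) ^ 2
    - F * x

section GalileanBoost

/-- The action `S` boosted by the velocity `v` along the `y`-axis. The additional phase comes from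
the momentum `v / 2` and the kinetic energy `v ^ 2 / 4` of a particle of mass `1/2`, and its
additive constant is chosen so that it vanishes at `t = 0`, `y = y₀`. -/
def galileanBoost (v y₀ : 𝕜) (S : 𝕜 → 𝕜 → 𝕜 → 𝕜) (t x y : 𝕜) : 𝕜 :=
  S t x (y - v * t) + (v / 2 * (y - y₀ - v * t) + v ^ 2 / 4 * t)

variable {S : 𝕜 → 𝕜 → 𝕜 → 𝕜} {t x y : 𝕜}

theorem hasDerivAt_galileanBoost_time (v y₀ : 𝕜)
    (hS : DifferentiableAt 𝕜 (Function.uncurry fun τ η => S τ x η) (t, y - v * t)) :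
    HasDerivAt (fun τ => galileanBoost v y₀ S τ x y)
      (deriv (fun τ => S τ x (y - v * t)) t - v * deriv (fun η => S t x η) (y - v * t)
        + (v / 2 * -v + v ^ 2 / 4)) t := by
  have h_phase : HasDerivAt (fun τ => v / 2 * (y - y₀ - v * τ) + v ^ 2 / 4 * τ)
      (v / 2 * -v + v ^ 2 / 4) t :=
    (((hasDerivAt_const_mul v).const_sub (y - y₀)).const_mul (v / 2)).add
      (hasDerivAt_const_mul (v ^ 2 / 4))
  exact (hasDerivAt_apply_sub_const_mul hS).add h_phase

theorem deriv_galileanBoost_x (v y₀ : 𝕜) :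
    deriv (fun ξ => galileanBoost v y₀ S t ξ y) x = deriv (fun ξ => S t ξ (y - v * t)) x :=
  deriv_add_const _

theorem hasDerivAt_galileanBoost_y (v y₀ : 𝕜) (hS : DifferentiableAt 𝕜 (S t x) (y - v * t)) :
    HasDerivAt (fun η => galileanBoost v y₀ S t x η)
      (deriv (fun η => S t x η) (y - v * t) + v / 2) y := by
  have h_phase : HasDerivAt (fun η => v / 2 * (η - y₀ - v * t) + v ^ 2 / 4 * t) (v / 2) y := by
    simpa only [mul_one, id] using
      ((((hasDerivAt_id y).sub_const y₀).sub_const (v * t)).const_mul (v / 2)).add_const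
        (v ^ 2 / 4 * t)
  exact (hS.hasDerivAt.comp_sub_const y (v * t)).add h_phase

theorem hamiltonJacobiResidual_galileanBoost [NeZero (2 : 𝕜)] (B E v y₀ : 𝕜)
    (hS : DifferentiableAt 𝕜 (Function.uncurry fun τ η => S τ x η) (t, y - v * t)) :
    hamiltonJacobiResidual B (E + B * v) (galileanBoost v y₀ S) t x y
      = hamiltonJacobiResidual B E S t x (y - v * t) := by
  have h_slice : DifferentiableAt 𝕜 (S t x) (y - v * t) :=
    DifferentiableAt.comp (y - v * t) (f := fun η => (t, η)) hS (by fun_prop)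
  have h_two : (2 : 𝕜) ≠ 0 := two_ne_zero
  have h_four : (4 : 𝕜) = 2 * 2 := by norm_num
  rw [hamiltonJacobiResidual, hamiltonJacobiResidual,
    (hasDerivAt_galileanBoost_time v y₀ hS).deriv, deriv_galileanBoost_x,
    (hasDerivAt_galileanBoost_y v y₀ h_slice).deriv, h_four]
  field_simp
  ring

end GalileanBoost

section MagneticField

/-- The action of a particle in the magnetic field `B` alone, with a free function `c` in place of
`t ↦ cot (B * t)`, of which only the Riccati equation matters. -/
def magneticAction (B x₀ y₀ : 𝕜) (c : 𝕜 → 𝕜) (t x y : 𝕜) : 𝕜 :=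
  B / 4 * c t * ((y - y₀) ^ 2 + (x - x₀) ^ 2) - B / 2 * (x + x₀) * (y - y₀)

variable {B x₀ y₀ t : 𝕜} {c : 𝕜 → 𝕜}

theorem differentiableAt_magneticAction (hc : DifferentiableAt 𝕜 c t) (x y : 𝕜) :
    DifferentiableAt 𝕜 (Function.uncurry fun τ η => magneticAction B x₀ y₀ c τ x η) (t, y) := by
  have hc_fst : DifferentiableAt 𝕜 (fun p : 𝕜 × 𝕜 => c p.1) (t, y) :=
    DifferentiableAt.comp (t, y) hc differentiableAt_fst
  exact ((hc_fst.const_mul (B / 4)).mul (by fun_prop)).sub (by fun_prop)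

theorem hasDerivAt_magneticAction_time {c' : 𝕜} (hc : HasDerivAt c c' t) (x y : 𝕜) :
    HasDerivAt (fun τ => magneticAction B x₀ y₀ c τ x y)
      (B / 4 * c' * ((y - y₀) ^ 2 + (x - x₀) ^ 2)) t :=
  ((hc.const_mul (B / 4)).mul_const _).sub_const _

variable [NeZero (2 : 𝕜)]

theorem hasDerivAt_magneticAction_x (x y : 𝕜) :
    HasDerivAt (fun ξ => magneticAction B x₀ y₀ c t ξ y)
      (B / 2 * (c t * (x - x₀) - (y - y₀))) x := by
  have h_sq : HasDerivAt (fun ξ => (y - y₀) ^ 2 + (ξ - x₀) ^ 2) (2 * (x - x₀)) x := by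
    simpa using (((hasDerivAt_id x).sub_const x₀).pow 2).const_add ((y - y₀) ^ 2)
  have h_lin := (((hasDerivAt_id x).add_const x₀).const_mul (B / 2)).mul_const (y - y₀)
  refine ((h_sq.const_mul (B / 4 * c t)).sub h_lin).congr_deriv ?_
  have h_two : (2 : 𝕜) ≠ 0 := two_ne_zero
  have h_four : (4 : 𝕜) = 2 * 2 := by norm_num
  rw [h_four]
  field_simp

theorem hasDerivAt_magneticAction_y (x y : 𝕜) :
    HasDerivAt (fun η => magneticAction B x₀ y₀ c t x η)
      (B / 2 * (c t * (y - y₀) - (x + x₀))) y := by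
  have h_sq : HasDerivAt (fun η => (η - y₀) ^ 2 + (x - x₀) ^ 2) (2 * (y - y₀)) y := by
    simpa using (((hasDerivAt_id y).sub_const y₀).pow 2).add_const ((x - x₀) ^ 2)
  have h_lin := ((hasDerivAt_id y).sub_const y₀).const_mul (B / 2 * (x + x₀))
  refine ((h_sq.const_mul (B / 4 * c t)).sub h_lin).congr_deriv ?_
  have h_two : (2 : 𝕜) ≠ 0 := two_ne_zero
  have h_four : (4 : 𝕜) = 2 * 2 := by norm_num
  rw [h_four]
  field_simp

theorem hamiltonJacobiResidual_magneticAction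
    (hc : HasDerivAt c (-(B * (1 + c t ^ 2))) t) (x y : 𝕜) :
    hamiltonJacobiResidual B 0 (magneticAction B x₀ y₀ c) t x y = 0 := by
  have h_kinetic : B / 2 * (c t * (y - y₀) - (x + x₀)) + B * x
      = B / 2 * (c t * (y - y₀) + (x - x₀)) := by
    have h_two : (2 : 𝕜) ≠ 0 := two_ne_zero
    field_simp
    ring
  have h_sum_sq : (c t * (x - x₀) - (y - y₀)) ^ 2 + (c t * (y - y₀) + (x - x₀)) ^ 2
      = (1 + c t ^ 2) * ((y - y₀) ^ 2 + (x - x₀) ^ 2) := by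
    ring
  have h_quarter : B ^ 2 / 4 = (B / 2) ^ 2 := by
    rw [div_pow]
    norm_num
  rw [hamiltonJacobiResidual, (hasDerivAt_magneticAction_time hc x y).deriv,
    (hasDerivAt_magneticAction_x x y).deriv, (hasDerivAt_magneticAction_y x y).deriv,
    h_kinetic]
  linear_combination (B / 2) ^ 2 * h_sum_sq
    - (1 + c t ^ 2) * ((y - y₀) ^ 2 + (x - x₀) ^ 2) * h_quarter

end MagneticField

/-- The action of a particle in the crossed fields `B` and `F`, with a free function `c` in place of
`t ↦ cot (B * t)`. -/
def crossedFieldsAction (B F x₀ y₀ : 𝕜) (c : 𝕜 → 𝕜) (t x y : 𝕜) : 𝕜 :=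
  F ^ 2 / (4 * B ^ 2) * t + F / (2 * B) * (y - y₀ - F / B * t)
    - B / 2 * (x + x₀) * (y - y₀ - F / B * t)
    + B / 4 * c t * ((y - y₀ - F / B * t) ^ 2 + (x - x₀) ^ 2)

theorem crossedFieldsAction_eq_galileanBoost (B F x₀ y₀ : 𝕜) (c : 𝕜 → 𝕜) :
    crossedFieldsAction B F x₀ y₀ c = galileanBoost (F / B) y₀ (magneticAction B x₀ y₀ c) := by
  ext t x y
  simp only [crossedFieldsAction, galileanBoost, magneticAction]
  ring

theorem stmt7_general [NeZero (2 : 𝕜)] {B F x₀ y₀ t : 𝕜} {c : 𝕜 → 𝕜} (hB : B ≠ 0)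
    (hc : HasDerivAt c (-(B * (1 + c t ^ 2))) t) (x y : 𝕜) :
    hamiltonJacobiResidual B F (crossedFieldsAction B F x₀ y₀ c) t x y = 0 := by
  have h_field : F = 0 + B * (F / B) := by rw [zero_add, mul_div_cancel₀ F hB]
  calc hamiltonJacobiResidual B F (crossedFieldsAction B F x₀ y₀ c) t x y
      = hamiltonJacobiResidual B (0 + B * (F / B))
          (galileanBoost (F / B) y₀ (magneticAction B x₀ y₀ c)) t x y := by
        rw [← h_field, crossedFieldsAction_eq_galileanBoost]
    _ = hamiltonJacobiResidual B 0 (magneticAction B x₀ y₀ c) t x (y - F / B * t) :=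
        hamiltonJacobiResidual_galileanBoost B 0 (F / B) y₀
          (differentiableAt_magneticAction hc.differentiableAt x _)
    _ = 0 := hamiltonJacobiResidual_magneticAction hc x _

end CrossedFields

theorem hasDerivAt_cot {u : ℝ} (hu : Real.sin u ≠ 0) :
    HasDerivAt Real.cot (-(1 + Real.cot u ^ 2)) u := by
  have h_quot : Real.cot = fun v => Real.cos v / Real.sin v := funext Real.cot_eq_cos_div_sin
  rw [h_quot]
  refine ((Real.hasDerivAt_cos u).div (Real.hasDerivAt_sin u) hu).congr_deriv ?_
  field_simp
  ring

theorem hasDerivAt_cot_const_mul {B t : ℝ} (ht : Real.sin (B * t) ≠ 0) :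
    HasDerivAt (fun τ => Real.cot (B * τ)) (-(B * (1 + Real.cot (B * t) ^ 2))) t :=
  ((hasDerivAt_cot ht).comp t (hasDerivAt_const_mul B)).congr_deriv (by ring)

/-- The classical crossed-fields action `S(t,x,y)` (with fixed initial point `(x₀,y₀)`)
satisfies the Hamilton–Jacobi equation `∂ₜS + (∂ₓS)² + (∂_yS + Bx)² − Fx = 0` on the
open set `{(t,x,y) : sin(Bt) ≠ 0}`, for the classical Hamiltonian
`H(x,y,pₓ,p_y) = pₓ² + (p_y + Bx)² − Fx`. -/
theorem stmt7 (B F x₀ y₀ : ℝ) (hB : B ≠ 0) :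
    let S : ℝ → ℝ → ℝ → ℝ := fun t x y =>
      F^2/(4*B^2) * t + F/(2*B) * (y - y₀ - F/B*t)
      - B/2 * (x + x₀) * (y - y₀ - F/B*t)
      + B/4 * Real.cot (B*t) * ((y - y₀ - F/B*t)^2 + (x - x₀)^2)
    ∀ t x y : ℝ, Real.sin (B*t) ≠ 0 →
      deriv (fun τ => S τ x y) t
        + (deriv (fun ξ => S t ξ y) x)^2
        + (deriv (fun η => S t x η) y + B*x)^2
        - F*x = 0 := by
  intro _ t x y hsin
  exact stmt7_general hB (hasDerivAt_cot_const_mul hsin) x y
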